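/- Suppose n ≥ 1 and r = 3. Then sup_{z ≥ 0} |P(F_3 ≤ z) − P(Y_2 ≤ z)| ≤ 29/n^{1/4} + 67/n^{1/2} + 62/n^{3/4} + 8/n^{5/4} + 38/n^{3/2}. -/

import Mathlib

open MeasureTheory Finset Real

noncomputable section

instance instMSPerm (r : ℕ) : MeasurableSpace (Equiv.Perm (Fin r)) := ⊤

/-- The joint law of `n` independent uniformly random permutations of `{1, …, r}`:
the uniform probability measure on the finite product space. -/
def friedmanMeasure (n r : ℕ) : Measure (Fin n → Equiv.Perm (Fin r)) :=
  (PMF.uniformOfFintype (Fin n → Equiv.Perm (Fin r))).toMeasure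

/-- `ρ_i(j) = π_i(j) - (r+1)/2`, where `π_i(j) ∈ {1, …, r}` is the rank assigned by the
`i`-th permutation to treatment `j` (a permutation of `Fin r` assigns values in `{0, …, r-1}`,
hence the `+ 1`). -/
def rho (n r : ℕ) (i : Fin n) (j : Fin r) (ω : Fin n → Equiv.Perm (Fin r)) : ℝ :=
  ((ω i j : ℕ) : ℝ) + 1 - ((r : ℝ) + 1) / 2

/-- `S_j = (√12/√(r(r+1)n)) ∑_{i=1}^n ρ_i(j)`. -/
def Sstat (n r : ℕ) (j : Fin r) (ω : Fin n → Equiv.Perm (Fin r)) : ℝ :=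
  Real.sqrt 12 / Real.sqrt ((r : ℝ) * ((r : ℝ) + 1) * (n : ℝ)) * ∑ i, rho n r i j ω

/-- Friedman's statistic `F_r = ∑_{j=1}^r S_j²`. -/
def friedman (n r : ℕ) (ω : Fin n → Equiv.Perm (Fin r)) : ℝ :=
  ∑ j, (Sstat n r j ω) ^ 2

/-- The chi-square distribution with `p` degrees of freedom: the Gamma distribution
with shape `p/2` and rate `1/2`. -/
def chiSq (p : ℕ) : Measure ℝ := ProbabilityTheory.gammaMeasure ((p : ℝ) / 2) (1 / 2)

end

open Complex Metric

/-- The heat kernel on the plane at time `t`: the density of the centred Gaussian law with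
covariance `2 t • 1`. -/
noncomputable def heatKernel (t : ℝ) (x : ℂ) : ℝ :=
  (4 * π * t)⁻¹ * Real.exp (-(4 * t)⁻¹ * ‖x‖ ^ 2)

lemma heatKernel_nonneg {t : ℝ} (ht : 0 < t) (x : ℂ) : 0 ≤ heatKernel t x := by
  unfold heatKernel; positivity

lemma integrable_exp_neg_mul_sq_norm {b : ℝ} (hb : 0 < b) :
    Integrable (fun x : ℂ ↦ Real.exp (-b * ‖x‖ ^ 2)) := by
  have h := (GaussianFourier.integrable_cexp_neg_mul_sq_norm_add (V := ℂ) (b := (b : ℂ)) (by simpa) 0 0).re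
  refine h.congr (ae_of_all _ fun x ↦ ?_)
  simp only [zero_mul, add_zero, RCLike.re_to_complex]
  rw [← Complex.ofReal_re (Real.exp _)]
  push_cast
  rfl

lemma integral_exp_neg_mul_sq_norm {b : ℝ} (hb : 0 < b) :
    ∫ x : ℂ, Real.exp (-b * ‖x‖ ^ 2) = π / b := by
  rw [GaussianFourier.integral_rexp_neg_mul_sq_norm hb]
  simp

lemma integrable_heatKernel {t : ℝ} (ht : 0 < t) : Integrable (heatKernel t) :=
  (integrable_exp_neg_mul_sq_norm (b := (4 * t)⁻¹) (by positivity)).const_mul _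

lemma integrable_heatKernel_sub {t : ℝ} (ht : 0 < t) (w : ℂ) :
    Integrable (fun x ↦ heatKernel t (x - w)) :=
  (integrable_heatKernel ht).comp_sub_right w

lemma integral_heatKernel {t : ℝ} (ht : 0 < t) : ∫ x, heatKernel t x = 1 := by
  unfold heatKernel
  rw [integral_const_mul, integral_exp_neg_mul_sq_norm (by positivity)]
  have := Real.pi_pos
  field_simp

lemma setIntegral_closedBall_heatKernel {t : ℝ} (ht : 0 < t) {R : ℝ} (hR : 0 ≤ R) :
    ∫ x in closedBall 0 R, heatKernel t x = 1 - Real.exp (-(4 * t)⁻¹ * R ^ 2) := by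
  have hind : ∀ x : ℂ, (closedBall (0 : ℂ) R).indicator (heatKernel t) x =
      (fun r ↦ (Set.Iic R).indicator
        (fun r ↦ (4 * π * t)⁻¹ * Real.exp (-(4 * t)⁻¹ * r ^ 2)) r) ‖x‖ := by
    intro x
    by_cases hx : ‖x‖ ≤ R <;> simp [Set.indicator, hx, heatKernel]
  rw [← integral_indicator measurableSet_closedBall]
  simp_rw [hind]
  rw [integral_fun_norm_addHaar]
  have hvol : (volume : Measure ℂ).real (ball 0 1) = π := by
    simp [Measure.real]
  rw [hvol, Complex.finrank_real_complex]
  have hderiv : ∀ r : ℝ, HasDerivAt (fun r ↦ -(2 * π)⁻¹ * Real.exp (-(4 * t)⁻¹ * r ^ 2))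
      (r * ((4 * π * t)⁻¹ * Real.exp (-(4 * t)⁻¹ * r ^ 2))) r := by
    intro r
    refine ((((hasDerivAt_pow 2 r).const_mul (-(4 * t)⁻¹)).exp).const_mul
      (-(2 * π)⁻¹)).congr_deriv ?_
    have := Real.pi_pos
    push_cast
    field_simp
  have hset : ∫ y in Set.Ioi (0 : ℝ), y ^ (2 - 1) • (Set.Iic R).indicator
        (fun r ↦ (4 * π * t)⁻¹ * Real.exp (-(4 * t)⁻¹ * r ^ 2)) y
      = ∫ y in (0 : ℝ)..R, y * ((4 * π * t)⁻¹ * Real.exp (-(4 * t)⁻¹ * y ^ 2)) := by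
    rw [intervalIntegral.integral_of_le hR, ← Set.Ioi_inter_Iic,
      ← setIntegral_indicator measurableSet_Iic]
    refine setIntegral_congr_fun measurableSet_Ioi fun y _ ↦ ?_
    by_cases hy : y ≤ R <;> simp [Set.indicator, hy]
  rw [hset, intervalIntegral.integral_eq_sub_of_hasDerivAt (fun r _ ↦ hderiv r)
    (Continuous.intervalIntegrable (by fun_prop) _ _)]
  have := Real.pi_pos
  simp only [nsmul_eq_mul, smul_eq_mul]
  field_simp
  simp
  ring

lemma setIntegral_closedBall_heatKernel_sub {t : ℝ} (ht : 0 < t) {δ : ℝ} (hδ : 0 ≤ δ) (w : ℂ) :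
    ∫ x in closedBall w δ, heatKernel t (x - w) = 1 - Real.exp (-(4 * t)⁻¹ * δ ^ 2) := by
  rw [← setIntegral_closedBall_heatKernel ht hδ,
    ← (measurePreserving_sub_right volume w).setIntegral_preimage_emb
      (MeasurableEquiv.subRight w).measurableEmbedding (heatKernel t) (closedBall 0 δ)]
  congr 2
  ext x
  simp [dist_eq_norm]

/-- Convolving with a heat kernel moves little mass out of a slightly enlarged disc. -/
lemma le_setIntegral_heatKernel_sub_of_norm_le {t : ℝ} (ht : 0 < t) {R δ : ℝ} (hδ : 0 ≤ δ)
    {w : ℂ} (hw : ‖w‖ ≤ R) :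
    1 - Real.exp (-(4 * t)⁻¹ * δ ^ 2) ≤ ∫ x in closedBall 0 (R + δ), heatKernel t (x - w) := by
  rw [← setIntegral_closedBall_heatKernel_sub ht hδ w]
  refine setIntegral_mono_set (integrable_heatKernel_sub ht w).integrableOn
    (ae_of_all _ fun x ↦ heatKernel_nonneg ht _) (LE.le.eventuallyLE ?_)
  exact closedBall_subset_closedBall' (by simpa [add_comm R] using hw)

/-- Convolving with a heat kernel moves little mass into a slightly shrunk disc. -/
lemma setIntegral_heatKernel_sub_le_of_lt_norm {t : ℝ} (ht : 0 < t) {R δ : ℝ} (hδ : 0 ≤ δ)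
    {w : ℂ} (hw : R < ‖w‖) :
    ∫ x in closedBall 0 (R - δ), heatKernel t (x - w) ≤ Real.exp (-(4 * t)⁻¹ * δ ^ 2) := by
  have hint := integrable_heatKernel_sub ht w
  have hcompl : ∫ x in (closedBall w δ)ᶜ, heatKernel t (x - w)
      = Real.exp (-(4 * t)⁻¹ * δ ^ 2) := by
    have h := integral_add_compl (s := closedBall w δ) measurableSet_closedBall hint
    rw [setIntegral_closedBall_heatKernel_sub ht hδ w,
      integral_sub_right_eq_self (μ := volume) (heatKernel t) w, integral_heatKernel ht] at h
    linarith
  rw [← hcompl]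
  refine setIntegral_mono_set hint.integrableOn
    (ae_of_all _ fun x ↦ heatKernel_nonneg ht _) (LE.le.eventuallyLE ?_)
  intro x hx
  simp only [mem_closedBall, dist_eq_norm, sub_zero, Set.mem_compl_iff, not_le] at hx ⊢
  have h := norm_sub_norm_le w x
  rw [norm_sub_rev] at h
  linarith

/-- The heat kernel is the inverse Fourier transform of a Gaussian. -/
lemma heatKernel_eq_integral {t : ℝ} (ht : 0 < t) (x : ℂ) :
    (heatKernel t x : ℂ) =
      (4 * π ^ 2 : ℂ)⁻¹ * ∫ ξ : ℂ, cexp (-t * ‖ξ‖ ^ 2 + I * inner ℝ x ξ) := by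
  rw [GaussianFourier.integral_cexp_neg_mul_sq_norm_add (by simpa) I x]
  have hπ : (π : ℂ) ≠ 0 := by exact_mod_cast Real.pi_ne_zero
  have ht' : (t : ℂ) ≠ 0 := by exact_mod_cast ht.ne'
  have h1 : ((Module.finrank ℝ ℂ : ℂ) / 2) = 1 := by simp
  have hexp : I ^ 2 * (‖x‖ : ℂ) ^ 2 / (4 * t) = -(4 * t : ℂ)⁻¹ * ‖x‖ ^ 2 := by
    rw [I_sq]
    field_simp
  rw [h1, cpow_one, hexp, heatKernel]
  push_cast
  field_simp

/-- The rank vector of a single ranking of three treatments, in orthonormal coordinates of the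
plane of vectors with coordinate sum zero. -/
noncomputable def rankVec (σ : Equiv.Perm (Fin 3)) : ℂ :=
  ⟨(((σ 0 : ℕ) : ℝ) - ((σ 2 : ℕ) : ℝ)) / √2, √3 / √2 * (((σ 1 : ℕ) : ℝ) - 1)⟩

/-- The normalised planar random walk whose squared norm is Friedman's statistic. -/
noncomputable def rankWalk (n : ℕ) (ω : Fin n → Equiv.Perm (Fin 3)) : ℂ :=
  ((√n)⁻¹ : ℝ) • ∑ i, rankVec (ω i)

lemma perm_fin_three_val_sum (σ : Equiv.Perm (Fin 3)) :
    ((σ 0 : ℕ) : ℝ) + ((σ 1 : ℕ) : ℝ) + ((σ 2 : ℕ) : ℝ) = 3 := by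
  have h : ((σ 0 : ℕ)) + (σ 1 : ℕ) + (σ 2 : ℕ) = 3 := by
    revert σ; decide
  exact_mod_cast h

lemma friedman_three_eq_norm_rankWalk_sq {n : ℕ} (hn : 1 ≤ n)
    (ω : Fin n → Equiv.Perm (Fin 3)) : friedman n 3 ω = ‖rankWalk n ω‖ ^ 2 := by
  have hn' : (0 : ℝ) < n := by exact_mod_cast hn
  have hc : √12 / √((3 : ℝ) * (3 + 1) * n) = (√n)⁻¹ := by
    rw [show (3 : ℝ) * (3 + 1) * n = 12 * n by ring, Real.sqrt_mul (by norm_num)]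
    have : 0 < √(n : ℝ) := Real.sqrt_pos.2 hn'
    field_simp
  have hS : ∀ j, Sstat n 3 j ω = (√n)⁻¹ * ∑ i, (((ω i j : ℕ) : ℝ) - 1) := by
    intro j
    simp only [Sstat, rho, Nat.cast_ofNat, hc]
    congr 1
    exact Finset.sum_congr rfl fun i _ ↦ by ring
  set T : Fin 3 → ℝ := fun j ↦ ∑ i, (((ω i j : ℕ) : ℝ) - 1) with hT
  have hsum : T 0 + T 1 + T 2 = 0 := by
    simp only [hT, ← Finset.sum_add_distrib]
    exact Finset.sum_eq_zero fun i _ ↦ by linarith [perm_fin_three_val_sum (ω i)]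
  have hre : (∑ i, rankVec (ω i)).re = (T 0 - T 2) / √2 := by
    simp only [Complex.re_sum, rankVec, hT, ← Finset.sum_sub_distrib, Finset.sum_div]
    exact Finset.sum_congr rfl fun i _ ↦ by ring
  have him : (∑ i, rankVec (ω i)).im = √3 / √2 * T 1 := by
    simp only [Complex.im_sum, rankVec, hT, Finset.mul_sum]
  rw [rankWalk, norm_smul, mul_pow, ← Complex.normSq_eq_norm_sq, Complex.normSq_apply, hre, him,
    friedman, Fin.sum_univ_three, hS, hS, hS, Real.norm_eq_abs, sq_abs]
  change ((√n)⁻¹ * T 0) ^ 2 + ((√n)⁻¹ * T 1) ^ 2 + ((√n)⁻¹ * T 2) ^ 2 = _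
  have h2 : √(2 : ℝ) ^ 2 = 2 := Real.sq_sqrt (by norm_num)
  have h3 : √(3 : ℝ) ^ 2 = 3 := Real.sq_sqrt (by norm_num)
  have h : (T 0 - T 2) / √2 * ((T 0 - T 2) / √2) + √3 / √2 * T 1 * (√3 / √2 * T 1)
      = T 0 ^ 2 + T 1 ^ 2 + T 2 ^ 2 := by
    have h0 : T 0 = -T 1 - T 2 := by linarith
    rw [show (T 0 - T 2) / √2 * ((T 0 - T 2) / √2) + √3 / √2 * T 1 * (√3 / √2 * T 1)
      = (T 0 - T 2) ^ 2 / √2 ^ 2 + √3 ^ 2 / √2 ^ 2 * T 1 ^ 2 by ring, h2, h3, h0]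
    ring
  rw [h]
  ring

lemma sum_perm_fin_three {M : Type*} [AddCommMonoid M] (f : Equiv.Perm (Fin 3) → M) :
    ∑ σ, f σ = f 1 + f (Equiv.swap 0 1) + f (Equiv.swap 0 2) + f (Equiv.swap 1 2)
      + f (Equiv.swap 0 1 * Equiv.swap 1 2) + f (Equiv.swap 1 2 * Equiv.swap 0 1) := by
  have h : (Finset.univ : Finset (Equiv.Perm (Fin 3))) = {1, Equiv.swap 0 1, Equiv.swap 0 2,
      Equiv.swap 1 2, Equiv.swap 0 1 * Equiv.swap 1 2, Equiv.swap 1 2 * Equiv.swap 0 1} := by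
    decide
  rw [h]
  repeat rw [Finset.sum_insert (by decide)]
  rw [Finset.sum_singleton]
  simp only [add_assoc]

/-- The characteristic function of the rank vector of a uniformly random ranking. -/
noncomputable def rankChar (ζ : ℂ) : ℝ :=
  (Real.cos (√2 * ζ.re) + Real.cos ((ζ.re + √3 * ζ.im) / √2)
    + Real.cos ((ζ.re - √3 * ζ.im) / √2)) / 3

lemma sum_cexp_inner_rankVec (ζ : ℂ) :
    ∑ σ, cexp (I * inner ℝ (rankVec σ) ζ) = 6 * rankChar ζ := by
  have h2 : √(2 : ℝ) * √2 = 2 := Real.mul_self_sqrt (by norm_num)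
  have h20 : √(2 : ℝ) ≠ 0 := by positivity
  have key : ∀ σ, inner ℝ (rankVec σ) ζ =
      ((((σ 0 : ℕ) : ℝ) - ((σ 2 : ℕ) : ℝ)) * ζ.re
        + (((σ 1 : ℕ) : ℝ) - 1) * (√3 * ζ.im)) / √2 := by
    intro σ
    simp only [rankVec, Complex.inner, Complex.mul_re, Complex.conj_re, Complex.conj_im]
    ring
  have hpair : ∀ θ : ℝ, cexp (I * (-θ : ℝ)) + cexp (I * θ) = 2 * (Real.cos θ : ℂ) := by
    intro θ
    rw [Complex.ofReal_cos, Complex.two_cos]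
    push_cast
    ring_nf
  have hdiv : ∀ x : ℝ, 2 * x / √2 = √2 * x := by
    intro x
    rw [div_eq_iff h20]
    linear_combination (-x) * h2
  have e1 : inner ℝ (rankVec 1) ζ = -(√2 * ζ.re) := by
    rw [key, ← hdiv]; simp; ring
  have e2 : inner ℝ (rankVec (Equiv.swap 0 2)) ζ = √2 * ζ.re := by
    rw [key, ← hdiv]; simp [Equiv.swap_apply_def]
  have e3 : inner ℝ (rankVec (Equiv.swap 0 1)) ζ = -((ζ.re + √3 * ζ.im) / √2) := by
    rw [key]; simp [Equiv.swap_apply_def]; ring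
  have e4 : inner ℝ (rankVec (Equiv.swap 0 1 * Equiv.swap 1 2)) ζ
      = (ζ.re + √3 * ζ.im) / √2 := by
    rw [key]; simp [Equiv.swap_apply_def]; ring
  have e5 : inner ℝ (rankVec (Equiv.swap 1 2)) ζ = -((ζ.re - √3 * ζ.im) / √2) := by
    rw [key]; simp [Equiv.swap_apply_def]; ring
  have e6 : inner ℝ (rankVec (Equiv.swap 1 2 * Equiv.swap 0 1)) ζ
      = (ζ.re - √3 * ζ.im) / √2 := by
    rw [key]; simp [Equiv.swap_apply_def]; ring
  rw [sum_perm_fin_three, e1, e2, e3, e4, e5, e6, rankChar]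
  generalize √2 * ζ.re = θ₁
  generalize (ζ.re + √3 * ζ.im) / √2 = θ₂
  generalize (ζ.re - √3 * ζ.im) / √2 = θ₃
  rw [Complex.ofReal_div, Complex.ofReal_add, Complex.ofReal_add, Complex.ofReal_ofNat]
  linear_combination hpair θ₁ + hpair θ₂ + hpair θ₃

lemma sum_cexp_inner_rankWalk (n : ℕ) (ξ : ℂ) :
    ∑ ω, cexp (I * inner ℝ (rankWalk n ω) ξ)
      = 6 ^ n * (rankChar (((√n)⁻¹ : ℝ) • ξ) : ℂ) ^ n := by
  rw [← mul_pow, ← sum_cexp_inner_rankVec, Fintype.sum_pow]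
  refine Finset.sum_congr rfl fun ω _ ↦ ?_
  rw [← Complex.exp_sum, rankWalk, real_inner_smul_left, sum_inner]
  simp only [real_inner_smul_right]
  push_cast
  simp only [Finset.mul_sum]

lemma abs_rankChar_le_one (ζ : ℂ) : |rankChar ζ| ≤ 1 := by
  rw [rankChar, abs_le]
  constructor <;>
  linarith [Real.cos_le_one (√2 * ζ.re), Real.cos_le_one ((ζ.re + √3 * ζ.im) / √2),
    Real.cos_le_one ((ζ.re - √3 * ζ.im) / √2), Real.neg_one_le_cos (√2 * ζ.re),
    Real.neg_one_le_cos ((ζ.re + √3 * ζ.im) / √2), Real.neg_one_le_cos ((ζ.re - √3 * ζ.im) / √2)]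

lemma cos_le_of_sq_le {θ q : ℝ} (hθ : θ ^ 2 ≤ 2 * q) (hq : q ≤ 1 / 2) :
    Real.cos θ ≤ 1 - θ ^ 2 / 2 + 5 / 48 * q * θ ^ 2 := by
  have habs : |θ| ≤ 1 := (sq_le_one_iff_abs_le_one θ).1 (by linarith)
  have h := (abs_le.1 (Real.cos_bound habs)).2
  have h4 : |θ| ^ 4 = θ ^ 2 * θ ^ 2 := by rw [← sq_abs]; ring
  nlinarith [mul_le_mul_of_nonneg_right hθ (sq_nonneg θ)]

lemma rankChar_bounds {ζ : ℂ} (hζ : ‖ζ‖ ^ 2 ≤ 1 / 2) :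
    1 - ‖ζ‖ ^ 2 / 2 ≤ rankChar ζ ∧
      rankChar ζ ≤ 1 - ‖ζ‖ ^ 2 / 2 + 5 / 48 * ‖ζ‖ ^ 2 * ‖ζ‖ ^ 2 := by
  have h2 : √(2 : ℝ) ^ 2 = 2 := Real.sq_sqrt (by norm_num)
  have h3 : √(3 : ℝ) ^ 2 = 3 := Real.sq_sqrt (by norm_num)
  set q := ‖ζ‖ ^ 2 with hqdef
  have hq : q = ζ.re ^ 2 + ζ.im ^ 2 := by
    rw [hqdef, ← Complex.normSq_eq_norm_sq, Complex.normSq_apply]; ring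
  have s1 : (√2 * ζ.re) ^ 2 = 2 * ζ.re ^ 2 := by rw [mul_pow, h2]
  have s2 : ((ζ.re + √3 * ζ.im) / √2) ^ 2 = (ζ.re + √3 * ζ.im) ^ 2 / 2 := by rw [div_pow, h2]
  have s3 : ((ζ.re - √3 * ζ.im) / √2) ^ 2 = (ζ.re - √3 * ζ.im) ^ 2 / 2 := by rw [div_pow, h2]
  have hs : (√2 * ζ.re) ^ 2 + ((ζ.re + √3 * ζ.im) / √2) ^ 2 + ((ζ.re - √3 * ζ.im) / √2) ^ 2
      = 3 * q := by
    rw [s1, s2, s3, hq]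
    linear_combination ζ.im ^ 2 * h3
  have b1 : (√2 * ζ.re) ^ 2 ≤ 2 * q := by rw [s1, hq]; nlinarith [sq_nonneg ζ.im]
  have b2 : ((ζ.re + √3 * ζ.im) / √2) ^ 2 ≤ 2 * q := by
    rw [s2, hq]; nlinarith [sq_nonneg (√3 * ζ.re - ζ.im)]
  have b3 : ((ζ.re - √3 * ζ.im) / √2) ^ 2 ≤ 2 * q := by
    rw [s3, hq]; nlinarith [sq_nonneg (√3 * ζ.re + ζ.im)]
  rw [rankChar]
  generalize √2 * ζ.re = θ₁ at *
  generalize (ζ.re + √3 * ζ.im) / √2 = θ₂ at *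
  generalize (ζ.re - √3 * ζ.im) / √2 = θ₃ at *
  constructor
  · linarith [Real.one_sub_sq_div_two_le_cos (x := θ₁), Real.one_sub_sq_div_two_le_cos (x := θ₂),
      Real.one_sub_sq_div_two_le_cos (x := θ₃)]
  · have hm : 5 / 48 * q * (θ₁ ^ 2 + θ₂ ^ 2 + θ₃ ^ 2) = 5 / 48 * q * (3 * q) := by rw [hs]
    linarith [cos_le_of_sq_le b1 hζ, cos_le_of_sq_le b2 hζ, cos_le_of_sq_le b3 hζ]

lemma exp_neg_le_quadratic {y : ℝ} (hy : 0 ≤ y) : Real.exp (-y) ≤ 1 - y + y ^ 2 / 2 := by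
  rw [Real.exp_neg, inv_le_iff_one_le_mul₀ (Real.exp_pos y)]
  have h := Real.quadratic_le_exp_of_nonneg hy
  have h0 : 0 ≤ 1 - y + y ^ 2 / 2 := by nlinarith [sq_nonneg (y - 1)]
  nlinarith [mul_le_mul_of_nonneg_left h h0, sq_nonneg (y ^ 2)]

lemma abs_rankChar_sub_exp_le {ζ : ℂ} (hζ : ‖ζ‖ ^ 2 ≤ 1 / 2) :
    |rankChar ζ - Real.exp (-(‖ζ‖ ^ 2 / 2))| ≤ (‖ζ‖ ^ 2) ^ 2 / 8 := by
  obtain ⟨h1, h2⟩ := rankChar_bounds hζ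
  have h3 := exp_neg_le_quadratic (y := ‖ζ‖ ^ 2 / 2) (by positivity)
  have h4 := Real.add_one_le_exp (-(‖ζ‖ ^ 2 / 2))
  rw [abs_le]
  constructor <;> nlinarith [sq_nonneg (‖ζ‖ ^ 2)]

lemma abs_rankChar_le_exp {ζ : ℂ} (hζ : ‖ζ‖ ^ 2 ≤ 1 / 2) :
    |rankChar ζ| ≤ Real.exp (-(‖ζ‖ ^ 2 / 4)) := by
  obtain ⟨h1, h2⟩ := rankChar_bounds hζ
  have h3 := Real.add_one_le_exp (-(‖ζ‖ ^ 2 / 4))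
  rw [abs_of_nonneg (by linarith)]
  nlinarith [sq_nonneg ‖ζ‖]

/-- Comparison of the characteristic function of the normalised walk with its Gaussian limit at
low frequencies. -/
lemma abs_rankChar_pow_sub_exp_le {n : ℕ} (hn : 2 ≤ n) {ξ : ℂ} (hξ : ‖ξ‖ ^ 2 ≤ n / 2) :
    |rankChar (((√n)⁻¹ : ℝ) • ξ) ^ n - Real.exp (-(1 / 2) * ‖ξ‖ ^ 2)|
      ≤ 64 / n * Real.exp (-(1 / 16) * ‖ξ‖ ^ 2) := by
  have hn0 : (2 : ℝ) ≤ n := by exact_mod_cast hn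
  have hnorm : ‖((√n)⁻¹ : ℝ) • ξ‖ ^ 2 = ‖ξ‖ ^ 2 / n := by
    rw [norm_smul, mul_pow, Real.norm_eq_abs, sq_abs, inv_pow, Real.sq_sqrt (by positivity)]
    ring
  set v := ‖ξ‖ ^ 2 with hv
  have hv0 : 0 ≤ v := by positivity
  set ζ := ((√n)⁻¹ : ℝ) • ξ
  have hζ : ‖ζ‖ ^ 2 ≤ 1 / 2 := by
    rw [hnorm, div_le_iff₀ (by linarith)]; linarith
  have hA := abs_rankChar_le_exp hζ
  have hAB := abs_rankChar_sub_exp_le hζ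
  rw [hnorm] at hA hAB
  have hB : Real.exp (-(1 / 2) * v) = Real.exp (-(v / n / 2)) ^ n := by
    rw [← Real.exp_nat_mul]; congr 1; field_simp
  have hBle : |Real.exp (-(v / n / 2))| ≤ Real.exp (-(v / n / 4)) := by
    rw [abs_of_pos (Real.exp_pos _)]
    apply Real.exp_le_exp.2
    have : 0 ≤ v / n := by positivity
    linarith
  have hpow : Real.exp (-(v / n / 4)) ^ (n - 1) ≤ Real.exp (-(1 / 8) * v) := by
    rw [← Real.exp_nat_mul, Nat.cast_sub (by omega), Nat.cast_one]
    apply Real.exp_le_exp.2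
    have h : (n : ℝ) * (v / n) = v := by field_simp
    have h' : 2 * (v / n) ≤ n * (v / n) := by gcongr
    nlinarith
  have hquad : v ^ 2 ≤ 512 * Real.exp (v / 16) := by
    nlinarith [Real.quadratic_le_exp_of_nonneg (x := v / 16) (by positivity)]
  rw [hB]
  calc |rankChar ζ ^ n - Real.exp (-(v / n / 2)) ^ n|
      ≤ |rankChar ζ - Real.exp (-(v / n / 2))| * n
          * max |rankChar ζ| |Real.exp (-(v / n / 2))| ^ (n - 1) := abs_pow_sub_pow_le ..
    _ ≤ ((v / n) ^ 2 / 8) * n * Real.exp (-(v / n / 4)) ^ (n - 1) := by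
        gcongr
        exact max_le hA hBle
    _ ≤ ((v / n) ^ 2 / 8) * n * Real.exp (-(1 / 8) * v) := by gcongr
    _ = v ^ 2 * Real.exp (-(1 / 8) * v) / (8 * n) := by field_simp
    _ ≤ 512 * Real.exp (v / 16) * Real.exp (-(1 / 8) * v) / (8 * n) := by gcongr
    _ = 64 / n * Real.exp (-(1 / 16) * v) := by
        rw [mul_assoc, ← Real.exp_add]
        ring_nf

lemma abs_rankChar_pow_sub_exp_mul_exp_le {n : ℕ} (hn : 2 ≤ n) {t : ℝ} (ht : 0 < t) (ξ : ℂ) :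
    |rankChar (((√n)⁻¹ : ℝ) • ξ) ^ n - Real.exp (-(1 / 2) * ‖ξ‖ ^ 2)|
        * Real.exp (-t * ‖ξ‖ ^ 2)
      ≤ 64 / n * Real.exp (-(1 / 16) * ‖ξ‖ ^ 2)
        + 2 * Real.exp (-(t * n / 4)) * Real.exp (-(t / 2) * ‖ξ‖ ^ 2) := by
  by_cases hξ : ‖ξ‖ ^ 2 ≤ n / 2
  · have h := abs_rankChar_pow_sub_exp_le hn hξ
    have hle : Real.exp (-t * ‖ξ‖ ^ 2) ≤ 1 := by
      apply Real.exp_le_one_iff.2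
      nlinarith [sq_nonneg ‖ξ‖]
    refine (mul_le_of_le_one_right (abs_nonneg _) hle).trans (h.trans ?_)
    exact le_add_of_nonneg_right (by positivity)
  · push Not at hξ
    have h2 : |rankChar (((√n)⁻¹ : ℝ) • ξ) ^ n - Real.exp (-(1 / 2) * ‖ξ‖ ^ 2)| ≤ 2 := by
      refine (abs_sub _ _).trans ?_
      rw [abs_pow, abs_of_pos (Real.exp_pos _)]
      have h3 := pow_le_one₀ (n := n) (abs_nonneg _) (abs_rankChar_le_one (((√n)⁻¹ : ℝ) • ξ))
      have h4 : Real.exp (-(1 / 2) * ‖ξ‖ ^ 2) ≤ 1 := by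
        apply Real.exp_le_one_iff.2
        nlinarith [sq_nonneg ‖ξ‖]
      linarith
    have hexp : Real.exp (-t * ‖ξ‖ ^ 2)
        ≤ Real.exp (-(t * n / 4)) * Real.exp (-(t / 2) * ‖ξ‖ ^ 2) := by
      rw [← Real.exp_add]
      apply Real.exp_le_exp.2
      nlinarith
    calc _ ≤ 2 * (Real.exp (-(t * n / 4)) * Real.exp (-(t / 2) * ‖ξ‖ ^ 2)) := by gcongr
      _ ≤ _ := by
        rw [← mul_assoc]
        exact le_add_of_nonneg_left (by positivity)

/-- The average over all outcomes, that is, the expectation under `friedmanMeasure n 3`. -/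
noncomputable def rankMean (n : ℕ) (f : (Fin n → Equiv.Perm (Fin 3)) → ℝ) : ℝ :=
  (6 ^ n : ℝ)⁻¹ * ∑ ω, f ω

lemma rankMean_mono {n : ℕ} {f g : (Fin n → Equiv.Perm (Fin 3)) → ℝ} (h : ∀ ω, f ω ≤ g ω) :
    rankMean n f ≤ rankMean n g :=
  mul_le_mul_of_nonneg_left (Finset.sum_le_sum fun ω _ ↦ h ω) (by positivity)

lemma card_outcomes (n : ℕ) : Fintype.card (Fin n → Equiv.Perm (Fin 3)) = 6 ^ n := by
  rw [Fintype.card_fun, Fintype.card_perm, Fintype.card_fin, Fintype.card_fin]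
  rfl

lemma rankMean_const (n : ℕ) (c : ℝ) : rankMean n (fun _ ↦ c) = c := by
  rw [rankMean, Finset.sum_const, Finset.card_univ, card_outcomes, nsmul_eq_mul]
  push_cast
  field_simp

lemma rankMean_add (n : ℕ) (f g : (Fin n → Equiv.Perm (Fin 3)) → ℝ) :
    rankMean n (fun ω ↦ f ω + g ω) = rankMean n f + rankMean n g := by
  simp only [rankMean, Finset.sum_add_distrib, mul_add]

lemma rankMean_setIntegral {n : ℕ} (s : Set ℂ)
    {f : (Fin n → Equiv.Perm (Fin 3)) → ℂ → ℝ} (hf : ∀ ω, Integrable (f ω)) :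
    rankMean n (fun ω ↦ ∫ x in s, f ω x) = ∫ x in s, rankMean n (fun ω ↦ f ω x) := by
  simp only [rankMean]
  rw [integral_const_mul, integral_finsetSum _ fun ω _ ↦ (hf ω).integrableOn]

lemma friedmanMeasure_toReal (n : ℕ) (s : Set (Fin n → Equiv.Perm (Fin 3))) :
    ((friedmanMeasure n 3) s).toReal = rankMean n (s.indicator 1) := by
  classical
  rw [friedmanMeasure, PMF.toMeasure_uniformOfFintype_apply s (Set.toFinite s).measurableSet,
    card_outcomes, rankMean, Finset.sum_indicator_eq_sum_filter]
  rw [ENNReal.toReal_div, Fintype.card_subtype]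
  simp [div_eq_inv_mul]

/-- Local limit bound for the walk smoothed by a small Gaussian. -/
lemma abs_rankMean_heatKernel_sub_le {n : ℕ} (hn : 2 ≤ n) {t : ℝ} (ht : 0 < t) (x : ℂ) :
    |rankMean n (fun ω ↦ heatKernel t (x - rankWalk n ω)) - heatKernel (1 / 2 + t) x|
      ≤ (256 / n + Real.exp (-(t * n / 4)) / t) / π := by
  have heven : ∀ (s : ℝ) (y : ℂ), heatKernel s (-y) = heatKernel s y := by
    intro s y; simp [heatKernel]
  have hint : ∀ {s : ℝ} (_ : 0 < s) (w : ℂ),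
      Integrable (fun ξ : ℂ ↦ cexp (-s * ‖ξ‖ ^ 2 + I * inner ℝ w ξ)) := fun hs w ↦
    GaussianFourier.integrable_cexp_neg_mul_sq_norm_add (by simpa) I w
  set D : ℂ → ℝ := fun ξ ↦
    rankChar (((√n)⁻¹ : ℝ) • ξ) ^ n - Real.exp (-(1 / 2) * ‖ξ‖ ^ 2) with hD
  have hrep : ((rankMean n (fun ω ↦ heatKernel t (x - rankWalk n ω))
      - heatKernel (1 / 2 + t) x : ℝ) : ℂ)
      = (4 * π ^ 2 : ℂ)⁻¹ * ∫ ξ : ℂ, cexp (-t * ‖ξ‖ ^ 2 + I * inner ℝ (-x) ξ) * D ξ := by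
    have h6 : (6 ^ n : ℂ) ≠ 0 := pow_ne_zero _ (by norm_num)
    have hsum : (rankMean n (fun ω ↦ heatKernel t (x - rankWalk n ω)) : ℂ)
        = (6 ^ n : ℂ)⁻¹ * ((4 * π ^ 2 : ℂ)⁻¹ *
          ∫ ξ : ℂ, ∑ ω, cexp (-t * ‖ξ‖ ^ 2 + I * inner ℝ (rankWalk n ω - x) ξ)) := by
      rw [integral_finsetSum _ fun ω _ ↦ hint ht _, Finset.mul_sum, rankMean]
      push_cast
      congr 1
      refine Finset.sum_congr rfl fun ω _ ↦ ?_
      rw [← heatKernel_eq_integral ht, ← heven, neg_sub]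
    rw [Complex.ofReal_sub, hsum, ← heven, heatKernel_eq_integral (by positivity),
      mul_left_comm, ← mul_sub, ← integral_const_mul, ← integral_sub]
    · congr 1
      refine integral_congr_ae (ae_of_all _ fun ξ ↦ ?_)
      have hfac : ∀ ω, cexp (-t * ‖ξ‖ ^ 2 + I * inner ℝ (rankWalk n ω - x) ξ)
          = cexp (-t * ‖ξ‖ ^ 2 + I * inner ℝ (-x) ξ) * cexp (I * inner ℝ (rankWalk n ω) ξ) := by
        intro ω
        rw [← Complex.exp_add, inner_sub_left, inner_neg_left]
        push_cast
        ring_nf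
      simp only [hfac, ← Finset.mul_sum, sum_cexp_inner_rankWalk, hD]
      rw [Complex.ofReal_sub, mul_sub]
      congr 1
      · push_cast
        field_simp
      · rw [Complex.ofReal_exp, ← Complex.exp_add]
        push_cast
        ring_nf
    · exact (integrable_finsetSum _ fun ω _ ↦ hint ht _).const_mul _
    · exact hint (by positivity) _
  have hnorm : ∀ ξ : ℂ, ‖cexp (-t * ‖ξ‖ ^ 2 + I * inner ℝ (-x) ξ) * D ξ‖
      ≤ 64 / n * Real.exp (-(1 / 16) * ‖ξ‖ ^ 2)
        + 2 * Real.exp (-(t * n / 4)) * Real.exp (-(t / 2) * ‖ξ‖ ^ 2) := by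
    intro ξ
    refine le_trans (le_of_eq ?_) (abs_rankChar_pow_sub_exp_mul_exp_le hn ht ξ)
    rw [norm_mul, Complex.norm_exp, Complex.norm_real, Real.norm_eq_abs, mul_comm]
    congr 2
    have : ((-t * ‖ξ‖ ^ 2 + I * inner ℝ (-x) ξ : ℂ)) =
        ((-t * ‖ξ‖ ^ 2 : ℝ) : ℂ) + I * ((inner ℝ (-x) ξ : ℝ) : ℂ) := by push_cast; ring
    rw [this, Complex.add_re, Complex.ofReal_re, mul_comm I, Complex.re_ofReal_mul, Complex.I_re,
      mul_zero, add_zero]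
  have hi1 := (integrable_exp_neg_mul_sq_norm (b := 1 / 16) (by norm_num)).const_mul (64 / (n : ℝ))
  have hi2 := (integrable_exp_neg_mul_sq_norm (b := t / 2) (by positivity)).const_mul
    (2 * Real.exp (-(t * n / 4)))
  have hbound := norm_integral_le_of_norm_le (hi1.add hi2) (ae_of_all _ hnorm)
  simp only [Pi.add_apply] at hbound
  rw [integral_add hi1 hi2, integral_const_mul, integral_const_mul,
    integral_exp_neg_mul_sq_norm (by norm_num), integral_exp_neg_mul_sq_norm (by positivity)]
    at hbound
  have hπ := Real.pi_pos
  rw [← Real.norm_eq_abs, ← Complex.norm_real, hrep, norm_mul]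
  have hc : ‖(4 * π ^ 2 : ℂ)⁻¹‖ = (4 * π ^ 2)⁻¹ := by
    rw [norm_inv, norm_mul, norm_pow, Complex.norm_real, Real.norm_eq_abs, abs_of_pos hπ]
    simp
  rw [hc]
  refine (mul_le_mul_of_nonneg_left hbound (by positivity)).trans (le_of_eq ?_)
  have hn0 : (0 : ℝ) < n := by exact_mod_cast (by omega : 0 < n)
  field_simp
  ring

lemma abs_rankMean_setIntegral_sub_le {n : ℕ} (hn : 2 ≤ n) {t : ℝ} (ht : 0 < t) {r : ℝ}
    (hr : 0 ≤ r) :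
    |rankMean n (fun ω ↦ ∫ x in closedBall 0 r, heatKernel t (x - rankWalk n ω))
        - (1 - Real.exp (-(4 * (1 / 2 + t))⁻¹ * r ^ 2))|
      ≤ r ^ 2 * (256 / n + Real.exp (-(t * n / 4)) / t) := by
  have hint : ∀ ω, Integrable (fun x ↦ heatKernel t (x - rankWalk n ω)) := fun ω ↦
    integrable_heatKernel_sub ht _
  have hint' : Integrable (fun x ↦ rankMean n (fun ω ↦ heatKernel t (x - rankWalk n ω))) :=
    (integrable_finsetSum _ fun ω _ ↦ hint ω).const_mul _
  have ht' : 0 < 1 / 2 + t := by positivity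
  rw [rankMean_setIntegral _ hint, ← setIntegral_closedBall_heatKernel ht' hr,
    ← integral_sub hint'.integrableOn (integrable_heatKernel ht').integrableOn,
    ← Real.norm_eq_abs]
  refine (norm_setIntegral_le_of_norm_le_const measure_closedBall_lt_top
    fun x _ ↦ abs_rankMean_heatKernel_sub_le hn ht x).trans (le_of_eq ?_)
  have hvol : (volume : Measure ℂ).real (closedBall 0 r) = r ^ 2 * π := by
    simp [Measure.real, hr]
  rw [hvol]
  have hπ := Real.pi_pos
  field_simp

lemma rankMean_indicator_norm_le {n : ℕ} (hn : 2 ≤ n) {t : ℝ} (ht : 0 < t) {R δ : ℝ}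
    (hR : 0 ≤ R) (hδ : 0 ≤ δ) :
    rankMean n ({ω | ‖rankWalk n ω‖ ≤ R}.indicator 1)
      ≤ 1 - Real.exp (-(4 * (1 / 2 + t))⁻¹ * (R + δ) ^ 2)
        + (R + δ) ^ 2 * (256 / n + Real.exp (-(t * n / 4)) / t)
        + Real.exp (-(4 * t)⁻¹ * δ ^ 2) := by
  have h1 : rankMean n ({ω | ‖rankWalk n ω‖ ≤ R}.indicator 1)
      ≤ rankMean n (fun ω ↦ (∫ x in closedBall 0 (R + δ), heatKernel t (x - rankWalk n ω))
          + Real.exp (-(4 * t)⁻¹ * δ ^ 2)) := by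
    refine rankMean_mono fun ω ↦ ?_
    by_cases h : ‖rankWalk n ω‖ ≤ R
    · have := le_setIntegral_heatKernel_sub_of_norm_le ht hδ h
      simp only [Set.indicator, Set.mem_ofPred_eq, h, if_true, Pi.one_apply]
      linarith
    · have : 0 ≤ ∫ x in closedBall 0 (R + δ), heatKernel t (x - rankWalk n ω) :=
        integral_nonneg fun x ↦ heatKernel_nonneg ht _
      simp only [Set.indicator, Set.mem_ofPred_eq, h, if_false]
      positivity
  rw [rankMean_add, rankMean_const] at h1
  linarith [(abs_le.1 (abs_rankMean_setIntegral_sub_le hn ht (add_nonneg hR hδ))).2]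

lemma le_rankMean_indicator_norm {n : ℕ} (hn : 2 ≤ n) {t : ℝ} (ht : 0 < t) {R δ : ℝ}
    (hδ : 0 ≤ δ) (hR : δ ≤ R) :
    1 - Real.exp (-(4 * (1 / 2 + t))⁻¹ * (R - δ) ^ 2)
        - (R - δ) ^ 2 * (256 / n + Real.exp (-(t * n / 4)) / t)
        - Real.exp (-(4 * t)⁻¹ * δ ^ 2)
      ≤ rankMean n ({ω | ‖rankWalk n ω‖ ≤ R}.indicator 1) := by
  have h1 : rankMean n (fun ω ↦ ∫ x in closedBall 0 (R - δ), heatKernel t (x - rankWalk n ω))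
      ≤ rankMean n (fun ω ↦ {ω | ‖rankWalk n ω‖ ≤ R}.indicator 1 ω
          + Real.exp (-(4 * t)⁻¹ * δ ^ 2)) := by
    refine rankMean_mono fun ω ↦ ?_
    by_cases h : ‖rankWalk n ω‖ ≤ R
    · have h2 : ∫ x in closedBall 0 (R - δ), heatKernel t (x - rankWalk n ω) ≤ 1 := by
        rw [← integral_heatKernel ht,
          ← integral_sub_right_eq_self (μ := volume) (heatKernel t) (rankWalk n ω)]
        exact setIntegral_le_integral (integrable_heatKernel_sub ht _)
          (ae_of_all _ fun x ↦ heatKernel_nonneg ht _)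
      simp only [Set.indicator, Set.mem_ofPred_eq, h, if_true, Pi.one_apply]
      linarith [Real.exp_pos (-(4 * t)⁻¹ * δ ^ 2)]
    · have := setIntegral_heatKernel_sub_le_of_lt_norm ht hδ (not_le.1 h)
      simp only [Set.indicator, Set.mem_ofPred_eq, h, if_false]
      linarith
  rw [rankMean_add, rankMean_const] at h1
  linarith [(abs_le.1 (abs_rankMean_setIntegral_sub_le hn ht (sub_nonneg.2 hR))).1]

lemma exp_neg_sub_exp_neg_le {a b : ℝ} :
    Real.exp (-a) - Real.exp (-b) ≤ Real.exp (-a) * (b - a) := by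
  have h : Real.exp (-b) = Real.exp (-a) * Real.exp (-(b - a)) := by
    rw [← Real.exp_add]; ring_nf
  nlinarith [Real.add_one_le_exp (-(b - a)), Real.exp_pos (-a)]

lemma mul_exp_neg_le_one {a s : ℝ} (h : s ≤ a + 1) : Real.exp (-a) * s ≤ 1 := by
  rw [Real.exp_neg, inv_mul_le_iff₀ (Real.exp_pos a)]
  linarith [Real.add_one_le_exp a]

lemma exp_neg_sub_exp_neg_enlarged_le {R δ t : ℝ} (hδ : 0 ≤ δ) (ht : 0 < t) :
    Real.exp (-(R ^ 2 / 2)) - Real.exp (-(4 * (1 / 2 + t))⁻¹ * (R + δ) ^ 2) ≤ δ + δ ^ 2 / 2 := by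
  have h1 : Real.exp (-((R + δ) ^ 2 / 2)) ≤ Real.exp (-(4 * (1 / 2 + t))⁻¹ * (R + δ) ^ 2) := by
    apply Real.exp_le_exp.2
    have : (4 * (1 / 2 + t))⁻¹ ≤ 1 / 2 := by
      rw [inv_le_comm₀ (by positivity) (by norm_num)]; linarith
    nlinarith [mul_le_mul_of_nonneg_right this (sq_nonneg (R + δ))]
  have h2 := exp_neg_sub_exp_neg_le (a := R ^ 2 / 2) (b := (R + δ) ^ 2 / 2)
  have h3 : Real.exp (-(R ^ 2 / 2)) * R ≤ 1 :=
    mul_exp_neg_le_one (by nlinarith [sq_nonneg (R - 1)])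
  have h4 : Real.exp (-(R ^ 2 / 2)) ≤ 1 := Real.exp_le_one_iff.2 (by nlinarith [sq_nonneg R])
  have h5 := mul_le_mul_of_nonneg_right h3 hδ
  have h6 := mul_le_mul_of_nonneg_right h4 (by positivity : 0 ≤ δ ^ 2 / 2)
  linarith

lemma exp_neg_shrunk_sub_exp_neg_le {R δ t : ℝ} (hδ : 0 ≤ δ) (ht : 0 < t)
    (ht' : t ≤ 1 / 2) :
    Real.exp (-(4 * (1 / 2 + t))⁻¹ * (R - δ) ^ 2) - Real.exp (-(R ^ 2 / 2))
      ≤ δ + δ ^ 2 / 2 + 2 * t := by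
  set s := R - δ with hs
  set a := (4 * (1 / 2 + t))⁻¹ * s ^ 2 with ha
  have ha0 : 0 ≤ a := by positivity
  have hs2 : s ^ 2 = 2 * a + 4 * t * a := by
    rw [ha]; field_simp; ring
  have hR : R ^ 2 / 2 = a + (2 * t * a + s * δ + δ ^ 2 / 2) := by
    rw [show R = s + δ by rw [hs]; ring]
    linear_combination hs2 / 2
  have h2 := exp_neg_sub_exp_neg_le (a := a) (b := R ^ 2 / 2)
  have h3 : Real.exp (-a) * s ≤ 1 := mul_exp_neg_le_one (by nlinarith [sq_nonneg (s - 2)])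
  have h4 : Real.exp (-a) ≤ 1 := Real.exp_le_one_iff.2 (by linarith)
  have h5 := mul_le_mul_of_nonneg_right h3 hδ
  have h6 := mul_le_mul_of_nonneg_right h4 (by positivity : 0 ≤ δ ^ 2 / 2)
  have h7 := mul_le_mul_of_nonneg_right (mul_exp_neg_le_one (a := a) (s := a) (by linarith)) ht.le
  rw [hR] at h2 ⊢
  rw [neg_mul, ← ha]
  linarith

lemma abs_rankMean_indicator_sub_le {n : ℕ} {m : ℝ} (hm : 29 ≤ m) (hmn : m ^ 4 = n) {R : ℝ}
    (hR : 0 ≤ R) (hRm : R ^ 2 ≤ m) :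
    |rankMean n ({ω | ‖rankWalk n ω‖ ≤ R}.indicator 1) - (1 - Real.exp (-(R ^ 2 / 2)))|
      ≤ 10 / m := by
  have hm0 : 0 < m := by linarith
  have hn : 2 ≤ n := by
    have : (2 : ℝ) ≤ n := by rw [← hmn]; nlinarith [pow_le_pow_left₀ (by norm_num) hm 4]
    exact_mod_cast this
  have hinv : m⁻¹ ≤ 1 / 29 := by rw [inv_le_comm₀ hm0 (by norm_num)]; linarith
  have hinv0 : 0 < m⁻¹ := by positivity
  have hmm : m * m⁻¹ = 1 := mul_inv_cancel₀ hm0.ne'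
  set u := m⁻¹ with hu
  have hδ : 0 ≤ 4 * u := by positivity
  have ht : 0 < 8 * u ^ 3 := by positivity
  have hu2 : u ^ 2 ≤ 1 / 29 * u := by nlinarith
  have hu3 : u ^ 3 ≤ 1 / 841 * u := by nlinarith
  have hdt : -(4 * (8 * u ^ 3))⁻¹ * (4 * u) ^ 2 = -(m / 2) := by
    rw [hu]; field_simp; norm_num
  have htn : -(8 * u ^ 3 * n / 4) = -(2 * m) := by
    rw [hu, ← hmn]; field_simp; norm_num
  have he1 : Real.exp (-(m / 2)) ≤ 2 * u := by
    have := mul_exp_neg_le_one (a := m / 2) (s := m / 2) (by linarith)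
    nlinarith [Real.exp_pos (-(m / 2))]
  have he2 : Real.exp (-(2 * m)) ≤ 15 / 4 * u ^ 5 := by
    have h := Real.pow_div_factorial_le_exp (x := 2 * m) (by positivity) 5
    rw [Real.exp_neg, hu, inv_le_comm₀ (Real.exp_pos _) (by positivity)]
    refine le_trans (le_of_eq ?_) h
    simp [Nat.factorial]
    field_simp
    norm_num
  have hK : 256 / (n : ℝ) + Real.exp (-(8 * u ^ 3 * n / 4)) / (8 * u ^ 3) ≤ 4 / 5 * u ^ 2 := by
    rw [htn]
    have h1 : 256 / (n : ℝ) = 256 * u ^ 4 := by rw [← hmn, hu]; field_simp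
    have h2 : Real.exp (-(2 * m)) / (8 * u ^ 3) ≤ 15 / 32 * u ^ 2 := by
      rw [div_le_iff₀ ht]
      nlinarith
    have h3 : u ^ 4 ≤ 1 / 841 * u ^ 2 := by nlinarith
    linarith [sq_nonneg u]
  have hK0 : 0 ≤ 256 / (n : ℝ) + Real.exp (-(8 * u ^ 3 * n / 4)) / (8 * u ^ 3) := by positivity
  have harea : ∀ {r : ℝ}, r ^ 2 ≤ 3 * m →
      r ^ 2 * (256 / (n : ℝ) + Real.exp (-(8 * u ^ 3 * n / 4)) / (8 * u ^ 3)) ≤ 12 / 5 * u := by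
    intro r hr
    calc _ ≤ 3 * m * (4 / 5 * u ^ 2) := by gcongr
      _ = 12 / 5 * (m * u) * u := by ring
      _ = 12 / 5 * u := by rw [hmm, mul_one]
  rw [show 10 / m = 10 * u from div_eq_mul_inv _ _, abs_le]
  constructor
  · rcases lt_or_ge R (4 * u) with hRδ | hRδ
    · have h0 : 0 ≤ rankMean n ({ω | ‖rankWalk n ω‖ ≤ R}.indicator 1) := by
        rw [← rankMean_const n 0]
        exact rankMean_mono fun ω ↦ Set.indicator_nonneg (fun _ _ ↦ zero_le_one) ω
      have h1 := Real.add_one_le_exp (-(R ^ 2 / 2))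
      nlinarith
    · have h1 := le_rankMean_indicator_norm hn ht hδ hRδ
      have h2 := exp_neg_shrunk_sub_exp_neg_le (R := R) hδ ht (by linarith)
      have h3 := harea (r := R - 4 * u) (by nlinarith)
      rw [hdt] at h1
      linarith
  · have h1 := rankMean_indicator_norm_le hn ht hR hδ
    have h2 := exp_neg_sub_exp_neg_enlarged_le (R := R) hδ ht
    have h3 := harea (r := R + 4 * u) (by nlinarith [sq_nonneg (R - 4 * u)])
    rw [hdt] at h1
    linarith

lemma abs_rankMean_indicator_sub_le_of_nonneg {n : ℕ} {m : ℝ} (hm : 29 ≤ m) (hmn : m ^ 4 = n)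
    {R : ℝ} (hR : 0 ≤ R) :
    |rankMean n ({ω | ‖rankWalk n ω‖ ≤ R}.indicator 1) - (1 - Real.exp (-(R ^ 2 / 2)))|
      ≤ 12 / m := by
  have hm0 : 0 < m := by linarith
  rcases le_total (R ^ 2) m with hRm | hRm
  · exact (abs_rankMean_indicator_sub_le hm hmn hR hRm).trans (by gcongr; norm_num)
  · have hsq : √m ^ 2 = m := Real.sq_sqrt hm0.le
    have h1 := (abs_le.1 (abs_rankMean_indicator_sub_le hm hmn (Real.sqrt_nonneg m) hsq.le)).1
    rw [hsq] at h1
    have hle : √m ≤ R := Real.sqrt_le_left hR |>.2 hRm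
    have hmono : rankMean n ({ω | ‖rankWalk n ω‖ ≤ √m}.indicator 1)
        ≤ rankMean n ({ω | ‖rankWalk n ω‖ ≤ R}.indicator 1) :=
      rankMean_mono fun ω ↦ Set.indicator_le_indicator_of_subset (fun _ h ↦ le_trans h hle)
        (fun _ ↦ zero_le_one) ω
    have hone : rankMean n ({ω | ‖rankWalk n ω‖ ≤ R}.indicator 1) ≤ 1 := by
      rw [← rankMean_const n 1]
      exact rankMean_mono fun ω ↦ Set.indicator_le_self' (fun _ _ ↦ zero_le_one) ω
    have he1 : Real.exp (-(m / 2)) ≤ 2 / m := by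
      have := mul_exp_neg_le_one (a := m / 2) (s := m / 2) (by linarith)
      rw [le_div_iff₀ hm0]
      linarith
    have he2 : Real.exp (-(R ^ 2 / 2)) ≤ Real.exp (-(m / 2)) := Real.exp_le_exp.2 (by linarith)
    have he3 := Real.exp_pos (-(R ^ 2 / 2))
    have hd : 12 / m = 10 / m + 2 / m := by ring
    have hd0 : 0 < 10 / m := by positivity
    rw [abs_le]
    constructor <;> linarith

lemma chiSq_two_Iic_toReal {z : ℝ} (hz : 0 ≤ z) :
    ((chiSq 2) (Set.Iic z)).toReal = 1 - Real.exp (-(z / 2)) := by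
  have := ProbabilityTheory.isProbabilityMeasure_expMeasure (r := 1 / 2) (by norm_num)
  have h := ProbabilityTheory.cdf_expMeasure_eq (r := 1 / 2) (by norm_num) z
  rw [if_pos hz, ProbabilityTheory.cdf_eq_real, ProbabilityTheory.expMeasure] at h
  have h1 : (((2 : ℕ) : ℝ) / 2) = 1 := by norm_num
  rw [chiSq, h1]
  simpa [Measure.real, div_eq_inv_mul] using h

/-- **Corollary 1.3, case `r = 3` (Gaunt–Reinert).** For `n ≥ 1` and all `z ≥ 0`,
`|P(F_3 ≤ z) − P(Y_2 ≤ z)| ≤ 29/n^{1/4} + 67/n^{1/2} + 62/n^{3/4} + 8/n^{5/4} + 38/n^{3/2}`. -/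
theorem friedman_three_kolmogorov_bound (n : ℕ) (hn : 1 ≤ n) (z : ℝ) (hz : 0 ≤ z) :
    |((friedmanMeasure n 3) {ω | friedman n 3 ω ≤ z}).toReal
        - ((chiSq 2) (Set.Iic z)).toReal|
      ≤ 29 / (n : ℝ) ^ ((1 : ℝ) / 4) + 67 / (n : ℝ) ^ ((1 : ℝ) / 2)
        + 62 / (n : ℝ) ^ ((3 : ℝ) / 4) + 8 / (n : ℝ) ^ ((5 : ℝ) / 4)
        + 38 / (n : ℝ) ^ ((3 : ℝ) / 2) := by
  have hn0 : (0 : ℝ) < n := by exact_mod_cast hn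
  have hset : {ω | friedman n 3 ω ≤ z} = {ω | ‖rankWalk n ω‖ ≤ √z} := by
    ext ω
    simp only [Set.mem_ofPred_eq, friedman_three_eq_norm_rankWalk_sq hn,
      Real.le_sqrt (norm_nonneg _) hz]
  have hexp : Real.exp (-(z / 2)) = Real.exp (-(√z ^ 2 / 2)) := by rw [Real.sq_sqrt hz]
  rw [friedmanMeasure_toReal, hset, chiSq_two_Iic_toReal hz]
  set m : ℝ := (n : ℝ) ^ ((1 : ℝ) / 4) with hm
  have hm0 : 0 < m := by positivity
  have hmn : m ^ 4 = n := by
    rw [hm, ← Real.rpow_natCast, ← Real.rpow_mul hn0.le]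
    norm_num
  suffices h : |rankMean n ({ω | ‖rankWalk n ω‖ ≤ √z}.indicator 1) - (1 - Real.exp (-(z / 2)))|
      ≤ 29 / m by
    have : 0 ≤ 67 / (n : ℝ) ^ ((1 : ℝ) / 2) + 62 / (n : ℝ) ^ ((3 : ℝ) / 4)
        + 8 / (n : ℝ) ^ ((5 : ℝ) / 4) + 38 / (n : ℝ) ^ ((3 : ℝ) / 2) := by positivity
    linarith
  rcases le_total 29 m with h29 | h29
  · rw [hexp]
    exact (abs_rankMean_indicator_sub_le_of_nonneg h29 hmn (Real.sqrt_nonneg z)).trans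
      (by gcongr; norm_num)
  · have h0 : 0 ≤ rankMean n ({ω | ‖rankWalk n ω‖ ≤ √z}.indicator 1) := by
      rw [← rankMean_const n 0]
      exact rankMean_mono fun ω ↦ Set.indicator_nonneg (fun _ _ ↦ zero_le_one) ω
    have h1 : rankMean n ({ω | ‖rankWalk n ω‖ ≤ √z}.indicator 1) ≤ 1 := by
      rw [← rankMean_const n 1]
      exact rankMean_mono fun ω ↦ Set.indicator_le_self' (fun _ _ ↦ zero_le_one) ω
    have h2 : 1 ≤ 29 / m := by rwa [one_le_div hm0]
    have h3 : Real.exp (-(z / 2)) ≤ 1 := Real.exp_le_one_iff.2 (by linarith)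
    have h4 := Real.exp_pos (-(z / 2))
    rw [abs_le]
    constructor <;> linarith
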